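/- Let n ≥ 1, 1 ≤ p < ∞, and let f ∈ L^p(ℝⁿ). If limsup_{t → 0⁺} t^{-p/2} ∫_{ℝⁿ} ∫_{ℝⁿ} p_t(x,y) |f(y) − f(x)|^p dy dx < ∞ (limsup taken in [0,∞]), then for every 0 < s < 1 one has 𝒩_{s,p}(f)^p = ∫_0^∞ t^{-(sp/2+1)} ∫_{ℝⁿ} ∫_{ℝⁿ} p_t(x,y) |f(y) − f(x)|^p dy dx dt < ∞. -/

import Mathlib

open Real MeasureTheory Filter Topology

/-!
Write `I t` for the double integral of `p_t(x, y) ‖f y - f x‖ ^ p`. Near `t = 0` the limsup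
hypothesis gives `I t ≤ C t ^ (p / 2)`, and `t ^ (p / 2 - s p / 2 - 1)` is integrable there because
`s < 1`. Away from `0` the heat kernel has total mass one in each variable, so
`I t ≤ 2 ^ (p + 1) ‖f‖_p ^ p`, and `t ^ (-(s p / 2 + 1))` is integrable at infinity because `0 < s`.
-/

section PowerWeights

variable {φ : ℝ → ENNReal}

lemma setLIntegral_rpow_mul_lt_top_of_rpow_mul_le {S : Set ℝ} (hS : MeasurableSet S)
    (hS_pos : S ⊆ Set.Ioi 0) {a r : ℝ} (hint : IntegrableOn (fun t : ℝ => t ^ (a + r)) S)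
    {C : ENNReal} (hC : C ≠ ⊤) (hφ : ∀ t ∈ S, ENNReal.ofReal (t ^ (-a)) * φ t ≤ C) :
    ∫⁻ t in S, ENNReal.ofReal (t ^ r) * φ t < ⊤ :=
  calc ∫⁻ t in S, ENNReal.ofReal (t ^ r) * φ t
      ≤ ∫⁻ t in S, ENNReal.ofReal (t ^ (a + r)) * C := by
        refine setLIntegral_mono' hS fun t ht => ?_
        have ht_pos : 0 < t := hS_pos ht
        have hsplit : t ^ r = t ^ (a + r) * t ^ (-a) := by
          rw [← Real.rpow_add ht_pos]
          ring_nf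
        rw [hsplit, ENNReal.ofReal_mul (by positivity), mul_assoc]
        gcongr
        exact hφ t ht
    _ = (∫⁻ t in S, ENNReal.ofReal (t ^ (a + r))) * C := lintegral_mul_const' _ _ hC
    _ < ⊤ := ENNReal.mul_lt_top hint.lintegral_lt_top hC.lt_top

theorem lintegral_Ioi_rpow_mul_lt_top_of_limsup_lt_top {a b : ℝ} (hb : 0 < b) (hba : b < a)
    {A : ENNReal} (hA : A ≠ ⊤) (hφ : ∀ t, 0 < t → φ t ≤ A)
    (hlimsup : limsup (fun t => ENNReal.ofReal (t ^ (-a)) * φ t) (𝓝[>] 0) < ⊤) :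
    ∫⁻ t in Set.Ioi 0, ENNReal.ofReal (t ^ (-(b + 1))) * φ t < ⊤ := by
  obtain ⟨C, hlimsup_lt, hC⟩ := exists_between hlimsup
  obtain ⟨δ, hδ : 0 < δ, hφ_le⟩ :=
    mem_nhdsGT_iff_exists_Ioc_subset.1 (eventually_lt_of_limsup_lt hlimsup_lt)
  have hnear : ∫⁻ t in Set.Ioc 0 δ, ENNReal.ofReal (t ^ (-(b + 1))) * φ t < ⊤ := by
    refine setLIntegral_rpow_mul_lt_top_of_rpow_mul_le measurableSet_Ioc
      (fun t ht => ht.1) (a := a) ?_ hC.ne fun t ht => (hφ_le ht).le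
    rw [integrableOn_Ioc_iff_integrableOn_Ioo, intervalIntegral.integrableOn_Ioo_rpow_iff hδ]
    linarith
  have hfar : ∫⁻ t in Set.Ioi δ, ENNReal.ofReal (t ^ (-(b + 1))) * φ t < ⊤ := by
    refine setLIntegral_rpow_mul_lt_top_of_rpow_mul_le measurableSet_Ioi
      (Set.Ioi_subset_Ioi hδ.le) (a := 0) ?_ hA fun t ht => ?_
    · exact integrableOn_Ioi_rpow_of_lt (by linarith) hδ
    · simpa using hφ t (hδ.trans ht)
  rw [← Set.Ioc_union_Ioi_eq_Ioi hδ.le]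
  exact (lintegral_union_le _ _ _).trans_lt (ENNReal.add_lt_top.2 ⟨hnear, hfar⟩)

end PowerWeights

section SubMarkovKernel

variable {α E : Type*} [MeasurableSpace α] {μ : Measure α}
  {K : α → α → ENNReal} [NormedAddCommGroup E] {p : ℝ} {f : α → E}

lemma lintegral_lintegral_mul_left_le (hK : Measurable (Function.uncurry K))
    (hKx : ∀ x, ∫⁻ y, K x y ∂μ ≤ 1) (g : α → ENNReal) :
    ∫⁻ x, ∫⁻ y, K x y * g x ∂μ ∂μ ≤ ∫⁻ x, g x ∂μ := by
  refine lintegral_mono fun x => ?_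
  rw [lintegral_mul_const _ hK.of_uncurry_left]
  exact mul_le_of_le_one_left' (hKx x)

lemma lintegral_lintegral_mul_right_le [SFinite μ] (hK : Measurable (Function.uncurry K))
    (hKy : ∀ y, ∫⁻ x, K x y ∂μ ≤ 1) {g : α → ENNReal} (hg : AEMeasurable g μ) :
    ∫⁻ x, ∫⁻ y, K x y * g y ∂μ ∂μ ≤ ∫⁻ y, g y ∂μ := by
  rw [lintegral_lintegral_swap (hK.aemeasurable.mul hg.comp_snd)]
  exact lintegral_lintegral_mul_left_le (K := fun y x => K x y) (hK.comp measurable_swap) hKy g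

theorem lintegral_lintegral_mul_enorm_sub_rpow_le [SFinite μ]
    (hK : Measurable (Function.uncurry K)) (hKx : ∀ x, ∫⁻ y, K x y ∂μ ≤ 1)
    (hKy : ∀ y, ∫⁻ x, K x y ∂μ ≤ 1) (hp : 0 ≤ p) (hf : AEStronglyMeasurable f μ) :
    ∫⁻ x, ∫⁻ y, K x y * ‖f y - f x‖ₑ ^ p ∂μ ∂μ ≤ 2 ^ (p + 1) * ∫⁻ x, ‖f x‖ₑ ^ p ∂μ := by
  have hg : AEMeasurable (fun x => ‖f x‖ₑ ^ p) μ := hf.enorm.pow_const p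
  have hpointwise (x y : α) :
      K x y * ‖f y - f x‖ₑ ^ p ≤ 2 ^ p * (K x y * ‖f y‖ₑ ^ p + K x y * ‖f x‖ₑ ^ p) :=
    calc K x y * ‖f y - f x‖ₑ ^ p
        ≤ K x y * (‖f y‖ₑ + ‖f x‖ₑ) ^ p := by gcongr; exact enorm_sub_le
      _ ≤ K x y * (2 ^ p * (‖f y‖ₑ ^ p + ‖f x‖ₑ ^ p)) := by
          gcongr
          exact ENNReal.add_rpow_le_two_rpow_mul_rpow_add_rpow _ _ hp
      _ = 2 ^ p * (K x y * ‖f y‖ₑ ^ p + K x y * ‖f x‖ₑ ^ p) := by ring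
  have htwo : (2 : ENNReal) ^ p ≠ ⊤ := ENNReal.rpow_ne_top_of_nonneg hp ENNReal.ofNat_ne_top
  have hinner : AEMeasurable (fun x => ∫⁻ y, K x y * ‖f y‖ₑ ^ p ∂μ) μ :=
    (hK.aemeasurable.mul hg.comp_snd).lintegral_prod_right'
  calc ∫⁻ x, ∫⁻ y, K x y * ‖f y - f x‖ₑ ^ p ∂μ ∂μ
      ≤ ∫⁻ x, ∫⁻ y, 2 ^ p * (K x y * ‖f y‖ₑ ^ p + K x y * ‖f x‖ₑ ^ p) ∂μ ∂μ :=
        lintegral_mono fun x => lintegral_mono fun y => hpointwise x y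
    _ = 2 ^ p * ((∫⁻ x, ∫⁻ y, K x y * ‖f y‖ₑ ^ p ∂μ ∂μ) +
          ∫⁻ x, ∫⁻ y, K x y * ‖f x‖ₑ ^ p ∂μ ∂μ) := by
        simp_rw [lintegral_const_mul' _ _ htwo]
        rw [← lintegral_add_left' hinner]
        congr 2 with x
        exact lintegral_add_right _ (hK.of_uncurry_left.mul_const _)
    _ ≤ 2 ^ p * ((∫⁻ x, ‖f x‖ₑ ^ p ∂μ) + ∫⁻ x, ‖f x‖ₑ ^ p ∂μ) := by
        gcongr 2 ^ p * (?_ + ?_)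
        · exact lintegral_lintegral_mul_right_le hK hKy hg
        · exact lintegral_lintegral_mul_left_le hK hKx _
    _ = 2 ^ (p + 1) * ∫⁻ x, ‖f x‖ₑ ^ p ∂μ := by
        rw [ENNReal.rpow_add _ _ two_ne_zero ENNReal.ofNat_ne_top, ENNReal.rpow_one]
        ring

end SubMarkovKernel

section HeatSemigroup

variable {V E : Type*} [NormedAddCommGroup V] [InnerProductSpace ℝ V] [NormedAddCommGroup E]

/-- The Gauss–Weierstrass heat kernel `p_t(x, y)` of a Euclidean space, normalised for the equation
`∂ₜ u = Δ u`. Only `0 < t` is meaningful. -/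
noncomputable def heatKernel (t : ℝ) (x y : V) : ℝ :=
  (4 * π * t) ^ (-(Module.finrank ℝ V : ℝ) / 2) * Real.exp (-‖x - y‖ ^ 2 / (4 * t))

lemma heatKernel_nonneg {t : ℝ} (ht : 0 ≤ t) (x y : V) : 0 ≤ heatKernel t x y := by
  unfold heatKernel
  positivity

lemma heatKernel_comm (t : ℝ) (x y : V) : heatKernel t x y = heatKernel t y x := by
  rw [heatKernel, heatKernel, norm_sub_rev]

variable [FiniteDimensional ℝ V] [MeasurableSpace V] [BorelSpace V]

lemma measurable_heatKernel (t : ℝ) :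
    Measurable (Function.uncurry (heatKernel t : V → V → ℝ)) := by
  simp only [Function.uncurry_def, heatKernel]
  fun_prop

theorem integral_heatKernel {t : ℝ} (ht : 0 < t) (x : V) : ∫ y, heatKernel t x y = 1 := by
  have hexponent (z : V) : -‖z‖ ^ 2 / (4 * t) = -(1 / (4 * t)) * ‖z‖ ^ 2 := by ring
  have hbase : π / (1 / (4 * t)) = 4 * π * t := by field_simp
  unfold heatKernel
  rw [integral_const_mul, integral_sub_left_eq_self (fun z : V => rexp (-‖z‖ ^ 2 / (4 * t)))]
  simp_rw [hexponent]
  rw [GaussianFourier.integral_rexp_neg_mul_sq_norm (by positivity), hbase,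
    ← Real.rpow_add (by positivity), neg_div, neg_add_cancel, Real.rpow_zero]

lemma lintegral_heatKernel {t : ℝ} (ht : 0 < t) (x : V) :
    ∫⁻ y, ENNReal.ofReal (heatKernel t x y) = 1 := by
  have hmass := integral_heatKernel ht x
  rw [← ofReal_integral_eq_lintegral_ofReal (integrable_of_integral_eq_one hmass)
    (.of_forall (heatKernel_nonneg ht.le x)), hmass, ENNReal.ofReal_one]

/-- The `p`-th power of the `L^p` modulus of `f` at time `t` measured by the heat semigroup: up to a
power of `t`, the integrand of the Besov seminorm. It takes values in `[0, ∞]`, so that no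
integrability is presupposed. -/
noncomputable def heatModulus (p : ℝ) (f : V → E) (t : ℝ) : ENNReal :=
  ∫⁻ x, ∫⁻ y, ENNReal.ofReal (heatKernel t x y * ‖f y - f x‖ ^ p)

/-- The `p`-th power `𝒩_{s,p}(f) ^ p` of the heat-semigroup Besov seminorm, with values in
`[0, ∞]`. -/
noncomputable def besovSeminormRpow (s p : ℝ) (f : V → E) : ENNReal :=
  ∫⁻ t in Set.Ioi (0 : ℝ), ENNReal.ofReal (t ^ (-(s * p / 2 + 1))) * heatModulus p f t

theorem heatModulus_le {p t : ℝ} (hp : 0 ≤ p) (ht : 0 < t) {f : V → E}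
    (hf : AEStronglyMeasurable f) :
    heatModulus p f t ≤ 2 ^ (p + 1) * ∫⁻ x, ‖f x‖ₑ ^ p := by
  have hintegrand (x y : V) : ENNReal.ofReal (heatKernel t x y * ‖f y - f x‖ ^ p) =
      ENNReal.ofReal (heatKernel t x y) * ‖f y - f x‖ₑ ^ p := by
    rw [ENNReal.ofReal_mul (heatKernel_nonneg ht.le x y),
      ← ENNReal.ofReal_rpow_of_nonneg (norm_nonneg _) hp, ofReal_norm]
  simp_rw [heatModulus, hintegrand]
  refine lintegral_lintegral_mul_enorm_sub_rpow_le (measurable_heatKernel t).ennreal_ofReal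
    (fun x => (lintegral_heatKernel ht x).le) (fun y => ?_) hp hf
  simp_rw [heatKernel_comm t _ y]
  exact (lintegral_heatKernel ht y).le

theorem limsup_finite_implies_besov_general {p : ℝ} (hp : 0 < p) {f : V → E}
    (hf : MemLp f (ENNReal.ofReal p))
    (hlimsup : limsup (fun t => ENNReal.ofReal (t ^ (-(p / 2))) * heatModulus p f t) (𝓝[>] 0) < ⊤)
    {s : ℝ} (hs0 : 0 < s) (hs1 : s < 1) :
    besovSeminormRpow s p f < ⊤ := by
  have hnorm : ∫⁻ x, ‖f x‖ₑ ^ p < ⊤ := by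
    simpa [ENNReal.toReal_ofReal hp.le] using lintegral_rpow_enorm_lt_top_of_eLpNorm_lt_top
      (ENNReal.ofReal_ne_zero_iff.2 hp) ENNReal.ofReal_ne_top hf.eLpNorm_lt_top
  have hbound : (2 : ENNReal) ^ (p + 1) * ∫⁻ x, ‖f x‖ₑ ^ p ≠ ⊤ :=
    ENNReal.mul_ne_top (ENNReal.rpow_ne_top_of_nonneg (by positivity) ENNReal.ofNat_ne_top)
      hnorm.ne
  exact lintegral_Ioi_rpow_mul_lt_top_of_limsup_lt_top (by positivity) (by nlinarith) hbound
    (fun t ht => heatModulus_le hp.le ht hf.aestronglyMeasurable) hlimsup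

end HeatSemigroup

theorem limsup_finite_implies_besov (n : ℕ) (hn : 1 ≤ n) (p : ℝ) (hp : 1 ≤ p)
    (f : EuclideanSpace ℝ (Fin n) → ℝ) (hf : MemLp f (ENNReal.ofReal p) volume)
    (hlimsup : Filter.limsup (fun t : ℝ =>
        ENNReal.ofReal (t ^ (-(p / 2))) *
          ∫⁻ x, ∫⁻ y, ENNReal.ofReal
            ((4 * π * t) ^ (-(n : ℝ) / 2) * Real.exp (-‖x - y‖ ^ 2 / (4 * t)) *
              |f y - f x| ^ p)) (𝓝[>] (0 : ℝ)) < ⊤)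
    (s : ℝ) (hs0 : 0 < s) (hs1 : s < 1) :
    (∫⁻ t in Set.Ioi (0 : ℝ),
        ENNReal.ofReal (t ^ (-(s * p / 2 + 1))) *
          ∫⁻ x, ∫⁻ y, ENNReal.ofReal
            ((4 * π * t) ^ (-(n : ℝ) / 2) * Real.exp (-‖x - y‖ ^ 2 / (4 * t)) *
              |f y - f x| ^ p)) < ⊤ := by
  have hgeneral := limsup_finite_implies_besov_general (f := f) (s := s)
    (zero_lt_one.trans_le hp) hf
  simp only [besovSeminormRpow, heatModulus, heatKernel, finrank_euclideanSpace_fin,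
    Real.norm_eq_abs] at hgeneral
  exact hgeneral hlimsup hs0 hs1
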